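/- Let -1 < α, β < -1/2, let K, R ∈ {0,1}, k, r ∈ {0,1,2}, W ≥ 1, s ≥ 0 and 1 ≤ p ≤ ∞ be fixed, and define Υ_s(t,θ,φ) := (sin(θ/2)+sin(φ/2))^{Kk} (cos(θ/2)+cos(φ/2))^{Rr} ∫∫_{[-1,1]²} (t² + q(θ,φ,u,v))^{-(α+β+3/2 + W/(2p) + Kk/2 + Rr/2 + s/2)} dπ_α^K(u) dπ_β^R(v) for t ∈ (0,1), θ, φ ∈ [0,π] (with the convention W/(2p) = 0 when p = ∞), where dπ_α^K := dΠ_{-1/2} if K = 0 and dΠ_{α+1} if K = 1, and dπ_β^R := dΠ_{-1/2} if R = 0 and dΠ_{β+1} if R = 1. Then there exists a constant C (depending only on α, β, K, R, k, r, W, s, p) such that for all θ ≠ φ in [0,π]: ‖1 + Υ_s(·,θ,φ)‖_{L^p((0,1), t^{W−1}dt)} ≤ C |θ−φ|^{-s} / μ_{α,β}(B(θ,|θ−φ|)). -/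

import Mathlib

open MeasureTheory Real Set
open scoped ENNReal Classical

noncomputable def cab (α β : ℝ) : ℝ :=
  Real.Gamma (α + β + 2) / (2 ^ (α + β + 1) * Real.Gamma (α + 1) * Real.Gamma (β + 1))

noncomputable def F4 (a₁ a₂ b₁ b₂ x y : ℝ) : ℝ :=
  ∑' p : ℕ × ℕ,
    (Polynomial.eval a₁ (ascPochhammer ℝ (p.1 + p.2)) *
      Polynomial.eval a₂ (ascPochhammer ℝ (p.1 + p.2))) /
    (Polynomial.eval b₁ (ascPochhammer ℝ p.1) * Polynomial.eval b₂ (ascPochhammer ℝ p.2) *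
      (Nat.factorial p.1) * (Nat.factorial p.2)) * x ^ p.1 * y ^ p.2

noncomputable def Hker (α β t θ φ : ℝ) : ℝ :=
  cab α β * Real.sinh (t / 2) / Real.cosh (t / 2) ^ (α + β + 2) *
    F4 ((α + β + 2) / 2) ((α + β + 3) / 2) (α + 1) (β + 1)
      ((Real.sin (θ / 2) * Real.sin (φ / 2) / Real.cosh (t / 2)) ^ 2)
      ((Real.cos (θ / 2) * Real.cos (φ / 2) / Real.cosh (t / 2)) ^ 2)

noncomputable def qf (θ φ u v : ℝ) : ℝ :=
  1 - u * Real.sin (θ / 2) * Real.sin (φ / 2) - v * Real.cos (θ / 2) * Real.cos (φ / 2)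

noncomputable def Psi (α β t θ φ u v : ℝ) : ℝ :=
  cab α β * Real.sinh (t / 2) / (Real.cosh (t / 2) - 1 + qf θ φ u v) ^ (α + β + 2)

noncomputable def PsiE (α β t θ φ u v : ℝ) : ℝ :=
  (Psi α β t θ φ u v + Psi α β t θ φ (-u) v + Psi α β t θ φ u (-v) +
    Psi α β t θ φ (-u) (-v)) / 4

noncomputable def PiMeas (ν : ℝ) : Measure ℝ :=
  if ν = -(1/2) then (2⁻¹ : ℝ≥0∞) • (Measure.dirac (-1) + Measure.dirac 1)
  else (volume.restrict (Icc (-1 : ℝ) 1)).withDensity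
    (fun u => ENNReal.ofReal
      (Real.Gamma (ν + 1) / (Real.sqrt π * Real.Gamma (ν + 1/2)) * (1 - u ^ 2) ^ (ν - 1/2)))

noncomputable def PiFun (γ u : ℝ) : ℝ :=
  Real.Gamma (γ + 1) / (Real.sqrt π * Real.Gamma (γ + 1/2)) *
    ∫ w in (0 : ℝ)..u, (1 - w ^ 2) ^ (γ - 1/2)

noncomputable def PiInt (ν : ℝ) (S : Set ℝ) (f : ℝ → ℝ) : ℝ :=
  if ν = -(1/2) then
    ((if (-1 : ℝ) ∈ S then f (-1) else 0) + (if (1 : ℝ) ∈ S then f 1 else 0)) / 2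
  else ∫ u in S, f u *
    (Real.Gamma (ν + 1) / (Real.sqrt π * Real.Gamma (ν + 1/2)) * (1 - u ^ 2) ^ (ν - 1/2))

noncomputable def muab (α β : ℝ) : Measure ℝ :=
  (volume.restrict (Icc (0 : ℝ) π)).withDensity
    (fun θ => ENNReal.ofReal (Real.sin (θ / 2) ^ (2 * α + 1) * Real.cos (θ / 2) ^ (2 * β + 1)))

def ballI (θ r : ℝ) : Set ℝ := Ioo (θ - r) (θ + r) ∩ Icc 0 π

noncomputable def piAux (α : ℝ) (K : ℕ) : Measure ℝ :=
  if K = 0 then PiMeas (-(1/2)) else PiMeas (α + 1)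

lemma lintegral_rpow_Ioc {γ c : ℝ} (hγ : -1 < γ) (hc : 0 ≤ c) :
    ∫⁻ x in Ioc 0 c, ENNReal.ofReal (x ^ γ) = ENNReal.ofReal (c ^ (γ + 1) / (γ + 1)) := by
  have hint : IntegrableOn (fun x : ℝ => x ^ γ) (Ioc 0 c) :=
    (intervalIntegrable_iff_integrableOn_Ioc_of_le hc).1
      (intervalIntegral.intervalIntegrable_rpow' hγ)
  rw [← ofReal_integral_eq_lintegral_ofReal hint, ← intervalIntegral.integral_of_le hc,
    integral_rpow (Or.inl hγ), Real.zero_rpow (by linarith), sub_zero]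
  filter_upwards [ae_restrict_mem measurableSet_Ioc] with x hx
  exact Real.rpow_nonneg hx.1.le _

lemma lintegral_rpow_Ioi {γ c : ℝ} (hγ : γ < -1) (hc : 0 < c) :
    ∫⁻ x in Ioi c, ENNReal.ofReal (x ^ γ) = ENNReal.ofReal (-c ^ (γ + 1) / (γ + 1)) := by
  rw [← ofReal_integral_eq_lintegral_ofReal (integrableOn_Ioi_rpow_of_lt hγ hc),
    integral_Ioi_rpow_of_lt hγ hc]
  filter_upwards [ae_restrict_mem measurableSet_Ioi] with x hx
  exact Real.rpow_nonneg (hc.le.trans hx.le) _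

lemma lintegral_max_rpow_mul_rpow_le {a F c : ℝ} (ha : 0 < a) (haF : a < F) (hc : 0 < c) :
    ∫⁻ w in Ioi (0 : ℝ), ENNReal.ofReal (max c w ^ (-F) * w ^ (a - 1)) ≤
      ENNReal.ofReal ((1 / a + 1 / (F - a)) * c ^ (a - F)) := by
  rw [← Ioc_union_Ioi_eq_Ioi hc.le]
  refine (lintegral_union_le _ _ _).trans ?_
  have h1 : ∫⁻ w in Ioc 0 c, ENNReal.ofReal (max c w ^ (-F) * w ^ (a - 1)) =
      ENNReal.ofReal (c ^ (a - F) / a) := by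
    have : ∫⁻ w in Ioc 0 c, ENNReal.ofReal (max c w ^ (-F) * w ^ (a - 1)) =
        ∫⁻ w in Ioc 0 c, ENNReal.ofReal (c ^ (-F)) * ENNReal.ofReal (w ^ (a - 1)) := by
      refine setLIntegral_congr_fun measurableSet_Ioc fun w hw => ?_
      rw [max_eq_left hw.2, ENNReal.ofReal_mul (by positivity)]
    rw [this, lintegral_const_mul' _ _ ENNReal.ofReal_ne_top,
      lintegral_rpow_Ioc (by linarith) hc.le, ← ENNReal.ofReal_mul (by positivity)]
    congr 1
    rw [sub_add_cancel, mul_div_assoc', ← Real.rpow_add hc]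
    congr 2; ring
  have h2 : ∫⁻ w in Ioi c, ENNReal.ofReal (max c w ^ (-F) * w ^ (a - 1)) =
      ENNReal.ofReal (c ^ (a - F) / (F - a)) := by
    have : ∫⁻ w in Ioi c, ENNReal.ofReal (max c w ^ (-F) * w ^ (a - 1)) =
        ∫⁻ w in Ioi c, ENNReal.ofReal (w ^ (a - F - 1)) := by
      refine setLIntegral_congr_fun measurableSet_Ioi fun w hw => ?_
      have hw' : c < w := hw
      rw [max_eq_right hw'.le, ← Real.rpow_add (hc.trans hw')]
      congr 2; ring
    rw [this, lintegral_rpow_Ioi (by linarith) hc]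
    congr 1
    rw [sub_add_cancel, ← neg_sub F a, neg_div_neg_eq]
  rw [h1, h2, ← ENNReal.ofReal_add (by positivity)
    (div_nonneg (by positivity) (by linarith))]
  apply le_of_eq
  congr 1
  ring

lemma one_sub_mul_sq_le {a b u : ℝ} (hu : u ∈ Icc (-1 : ℝ) 1) :
    (a + b) ^ 2 * (1 - u) / 4 ≤ (a - b) ^ 2 / 2 + (1 - u) * (a * b) := by
  nlinarith [mul_nonneg (by linarith [hu.1] : 0 ≤ 1 + u) (sq_nonneg (a - b))]

lemma qf_eq (θ φ u v : ℝ) :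
    qf θ φ u v = ((sin (θ / 2) - sin (φ / 2)) ^ 2 / 2 + (1 - u) * (sin (θ / 2) * sin (φ / 2))) +
      ((cos (θ / 2) - cos (φ / 2)) ^ 2 / 2 + (1 - v) * (cos (θ / 2) * cos (φ / 2))) := by
  unfold qf
  linear_combination (-1 / 2) * sin_sq_add_cos_sq (θ / 2) + (-1 / 2) * sin_sq_add_cos_sq (φ / 2)

lemma sin_half_nonneg {θ : ℝ} (h : θ ∈ Icc 0 π) : 0 ≤ sin (θ / 2) :=
  sin_nonneg_of_nonneg_of_le_pi (by linarith [h.1]) (by linarith [h.1, h.2])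

lemma cos_half_nonneg {θ : ℝ} (h : θ ∈ Icc 0 π) : 0 ≤ cos (θ / 2) :=
  cos_nonneg_of_mem_Icc ⟨by linarith [h.1, pi_pos], by linarith [h.2]⟩

lemma sq_abs_sub_le_qf {θ φ u v : ℝ} (hθ : θ ∈ Icc 0 π) (hφ : φ ∈ Icc 0 π)
    (hu : u ≤ 1) (hv : v ≤ 1) : |θ - φ| ^ 2 / (2 * π ^ 2) ≤ qf θ φ u v := by
  have h1 : cos ((θ - φ) / 2) ≤ 1 - 2 / π ^ 2 * ((θ - φ) / 2) ^ 2 := by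
    refine cos_le_one_sub_mul_cos_sq (abs_le.2 ⟨?_, ?_⟩) <;>
      linarith [hθ.1, hθ.2, hφ.1, hφ.2, pi_pos]
  rw [sub_div, cos_sub] at h1
  have h2 : 2 / π ^ 2 * (θ / 2 - φ / 2) ^ 2 = |θ - φ| ^ 2 / (2 * π ^ 2) := by
    rw [sq_abs]; field_simp
  have hs := mul_nonneg (sin_half_nonneg hθ) (sin_half_nonneg hφ)
  have hc := mul_nonneg (cos_half_nonneg hθ) (cos_half_nonneg hφ)
  unfold qf
  nlinarith [mul_nonneg (sub_nonneg.2 hu) hs, mul_nonneg (sub_nonneg.2 hv) hc]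

lemma qf_lower_bound {θ φ u v : ℝ} (hθ : θ ∈ Icc 0 π) (hφ : φ ∈ Icc 0 π)
    (hu : u ∈ Icc (-1 : ℝ) 1) (hv : v ∈ Icc (-1 : ℝ) 1) :
    (1 / 100) * (|θ - φ| ^ 2 + (cos (θ / 2) + cos (φ / 2)) ^ 2 * (1 - v) +
      (sin (θ / 2) + sin (φ / 2)) ^ 2 * (1 - u)) ≤ qf θ φ u v := by
  have h1 := sq_abs_sub_le_qf hθ hφ hu.2 hv.2
  have h2 := one_sub_mul_sq_le (a := sin (θ / 2)) (b := sin (φ / 2)) hu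
  have h3 := one_sub_mul_sq_le (a := cos (θ / 2)) (b := cos (φ / 2)) hv
  have h4 : |θ - φ| ^ 2 / 32 ≤ |θ - φ| ^ 2 / (2 * π ^ 2) := by
    apply div_le_div_of_nonneg_left (by positivity) (by positivity)
    nlinarith [pi_pos, pi_le_four]
  have h5 := mul_nonneg (sq_nonneg (sin (θ / 2) + sin (φ / 2))) (sub_nonneg.2 hu.2)
  have h6 := mul_nonneg (sq_nonneg (cos (θ / 2) + cos (φ / 2))) (sub_nonneg.2 hv.2)
  rw [qf_eq] at *
  nlinarith [sq_nonneg (|θ - φ|)]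

lemma qf_le_three {θ φ u v : ℝ} (hθ : θ ∈ Icc 0 π) (hφ : φ ∈ Icc 0 π)
    (hu : u ∈ Icc (-1 : ℝ) 1) (hv : v ∈ Icc (-1 : ℝ) 1) : qf θ φ u v ≤ 3 := by
  have hs := mul_nonneg (sin_half_nonneg hθ) (sin_half_nonneg hφ)
  have hc := mul_nonneg (cos_half_nonneg hθ) (cos_half_nonneg hφ)
  have hs' := mul_le_one₀ (sin_le_one (θ / 2)) (sin_half_nonneg hφ) (sin_le_one _)
  have hc' := mul_le_one₀ (cos_le_one (θ / 2)) (cos_half_nonneg hφ) (cos_le_one _)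
  unfold qf
  nlinarith [mul_nonneg (by linarith [hu.1] : 0 ≤ 1 + u) hs,
    mul_nonneg (by linarith [hv.1] : 0 ≤ 1 + v) hc]

lemma div_pi_le_sin_half {x : ℝ} (hx : x ∈ Icc 0 π) : x / π ≤ sin (x / 2) := by
  have := mul_le_sin (x := x / 2) (by linarith [hx.1]) (by linarith [hx.2])
  refine le_trans (le_of_eq ?_) this
  field_simp

lemma pi_sub_mem {x : ℝ} (hx : x ∈ Icc 0 π) : π - x ∈ Icc 0 π :=
  ⟨by linarith [hx.2], by linarith [hx.1]⟩

lemma cos_half_eq_sin (x : ℝ) : cos (x / 2) = sin ((π - x) / 2) := by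
  rw [sub_div, sin_pi_div_two_sub]

lemma abs_sub_div_pi_le_sin_add_sin {θ φ : ℝ} (hθ : θ ∈ Icc 0 π) (hφ : φ ∈ Icc 0 π) :
    |θ - φ| / π ≤ sin (θ / 2) + sin (φ / 2) := by
  have h : |θ - φ| ≤ θ + φ := abs_le.2 ⟨by linarith [hθ.1], by linarith [hφ.1]⟩
  calc |θ - φ| / π ≤ (θ + φ) / π := by gcongr
    _ = θ / π + φ / π := add_div ..
    _ ≤ _ := add_le_add (div_pi_le_sin_half hθ) (div_pi_le_sin_half hφ)

lemma abs_sub_div_pi_le_cos_add_cos {θ φ : ℝ} (hθ : θ ∈ Icc 0 π) (hφ : φ ∈ Icc 0 π) :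
    |θ - φ| / π ≤ cos (θ / 2) + cos (φ / 2) := by
  have := abs_sub_div_pi_le_sin_add_sin (pi_sub_mem hφ) (pi_sub_mem hθ)
  rw [cos_half_eq_sin, cos_half_eq_sin, add_comm]
  simpa using this

lemma sin_add_sin_le {θ φ : ℝ} (hθ : θ ∈ Icc 0 π) (hφ : φ ∈ Icc 0 π) :
    sin (θ / 2) + sin (φ / 2) ≤ θ + |θ - φ| := by
  have h1 := sin_le (x := θ / 2) (by linarith [hθ.1])
  have h2 := sin_le (x := φ / 2) (by linarith [hφ.1])
  linarith [neg_abs_le (θ - φ), hθ.1, abs_nonneg (θ - φ)]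

lemma cos_add_cos_le {θ φ : ℝ} (hθ : θ ∈ Icc 0 π) (hφ : φ ∈ Icc 0 π) :
    cos (θ / 2) + cos (φ / 2) ≤ (π - θ) + |θ - φ| := by
  have := sin_add_sin_le (pi_sub_mem hθ) (pi_sub_mem hφ)
  rw [cos_half_eq_sin, cos_half_eq_sin]
  rwa [sub_sub_sub_cancel_left, abs_sub_comm φ θ] at this

lemma rpow_le_max_rpow {z l h x : ℝ} (hl : 0 < l) (hlx : l ≤ x) (hxh : x ≤ h) :
    x ^ z ≤ max (l ^ z) (h ^ z) := by
  rcases le_total 0 z with hz | hz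
  · exact le_max_of_le_right (Real.rpow_le_rpow (hl.le.trans hlx) hxh hz)
  · exact le_max_of_le_left (Real.rpow_le_rpow_of_nonpos hl hlx hz)

/-- If `d / π ≤ T ≤ 2`, a product of powers of `d` and `T` stays bounded as soon as the exponent of
`d` and the total exponent are nonnegative. -/
lemma rpow_mul_rpow_le {x z d T : ℝ} (hx : 0 ≤ x) (hxz : 0 ≤ x + z) (hd : 0 < d) (hdπ : d ≤ π)
    (hdT : d / π ≤ T) (hT2 : T ≤ 2) :
    d ^ x * T ^ z ≤ π ^ x * 2 ^ z + π ^ x := by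
  have hT : 0 < T := (div_pos hd pi_pos).trans_le hdT
  rcases le_total 0 z with hz | hz
  · have : d ^ x * T ^ z ≤ π ^ x * 2 ^ z := by gcongr
    have : 0 < π ^ x := by positivity
    linarith
  · have h1 : T ^ z ≤ (d / π) ^ z := Real.rpow_le_rpow_of_nonpos (by positivity) hdT hz
    have h2 : (d / π) ^ (x + z) ≤ 1 :=
      Real.rpow_le_one (by positivity) ((div_le_one pi_pos).2 hdπ) hxz
    have h3 : d ^ x * (d / π) ^ z = π ^ x * (d / π) ^ (x + z) := by
      rw [Real.rpow_add (by positivity), Real.div_rpow hd.le pi_pos.le x]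
      field_simp
    have h4 : d ^ x * T ^ z ≤ d ^ x * (d / π) ^ z := by gcongr
    have h5 : π ^ x * (d / π) ^ (x + z) ≤ π ^ x * 1 := by gcongr
    have : 0 < π ^ x * 2 ^ z := by positivity
    linarith

lemma exists_rpow_mul_rpow_mul_rpow_le {x y z : ℝ} (hx : 0 ≤ x) (hxy : 0 ≤ x + y)
    (hxz : 0 ≤ x + z) :
    ∃ C : ℝ, 0 < C ∧ ∀ d S T : ℝ, 0 < d → d ≤ π → d / π ≤ S → d / π ≤ T → S ≤ 2 → T ≤ 2 →
      (1 / 2 ≤ S ∨ 1 / 2 ≤ T) → d ^ x * S ^ y * T ^ z ≤ C := by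
  refine ⟨max ((1 / 2) ^ y) (2 ^ y) * (π ^ x * 2 ^ z + π ^ x) +
    max ((1 / 2) ^ z) (2 ^ z) * (π ^ x * 2 ^ y + π ^ x), by positivity, ?_⟩
  intro d S T hd hdπ hdS hdT hS2 hT2 h
  have hS : 0 < S := (div_pos hd pi_pos).trans_le hdS
  have hT : 0 < T := (div_pos hd pi_pos).trans_le hdT
  have hp1 : 0 ≤ max ((1 / 2 : ℝ) ^ y) (2 ^ y) * (π ^ x * 2 ^ z + π ^ x) := by positivity
  have hp2 : 0 ≤ max ((1 / 2 : ℝ) ^ z) (2 ^ z) * (π ^ x * 2 ^ y + π ^ x) := by positivity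
  rcases h with h | h
  · have h1 := rpow_le_max_rpow (z := y) (by norm_num) h hS2
    have h2 := rpow_mul_rpow_le hx hxz hd hdπ hdT hT2
    have h3 : d ^ x * S ^ y * T ^ z ≤
        max ((1 / 2) ^ y) (2 ^ y) * (π ^ x * 2 ^ z + π ^ x) := by
      calc d ^ x * S ^ y * T ^ z = S ^ y * (d ^ x * T ^ z) := by ring
        _ ≤ _ := by gcongr
    linarith
  · have h1 := rpow_le_max_rpow (z := z) (by norm_num) h hT2
    have h2 := rpow_mul_rpow_le hx hxy hd hdπ hdS hS2
    have h3 : d ^ x * S ^ y * T ^ z ≤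
        max ((1 / 2) ^ z) (2 ^ z) * (π ^ x * 2 ^ y + π ^ x) := by
      calc d ^ x * S ^ y * T ^ z = T ^ z * (d ^ x * S ^ y) := by ring
        _ ≤ _ := by gcongr
    linarith

lemma half_le_sin_or_half_le_cos {θ : ℝ} (hθ : θ ∈ Icc 0 π) :
    1 / 2 ≤ sin (θ / 2) ∨ 1 / 2 ≤ cos (θ / 2) := by
  by_contra! h
  nlinarith [sin_sq_add_cos_sq (θ / 2), sin_half_nonneg hθ, cos_half_nonneg hθ, h.1, h.2]

lemma setLIntegral_comp_sub_left (c : ℝ) (f : ℝ → ℝ≥0∞) (s : Set ℝ) :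
    ∫⁻ x in (fun x => c - x) ⁻¹' s, f (c - x) = ∫⁻ x in s, f x :=
  (Measure.measurePreserving_sub_left volume c).setLIntegral_comp_preimage_emb
    (Homeomorph.subLeft c).measurableEmbedding f s

lemma setLIntegral_comp_add_left (c : ℝ) (f : ℝ → ℝ≥0∞) (s : Set ℝ) :
    ∫⁻ x in (fun x => c + x) ⁻¹' s, f (c + x) = ∫⁻ x in s, f x :=
  (measurePreserving_add_left volume c).setLIntegral_comp_preimage_emb
    (Homeomorph.addLeft c).measurableEmbedding f s

/-- Integrals of functions of `1 - u` against `PiMeas ν` are controlled by the endpoint `u = 1`. -/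
lemma exists_lintegral_PiMeas_le {ν : ℝ} (h0 : 0 < ν) (h1 : ν < 1 / 2) :
    ∃ C : ℝ, 0 < C ∧ ∀ f : ℝ → ℝ, AntitoneOn f (Ici 0) → (∀ x ∈ Ici 0, 0 ≤ f x) →
      ∫⁻ u, ENNReal.ofReal (f (1 - u)) ∂(PiMeas ν) ≤
        ENNReal.ofReal C * ∫⁻ w in Ioc 0 1, ENNReal.ofReal (f w * w ^ (ν - 1 / 2)) := by
  set c : ℝ := Real.Gamma (ν + 1) / (Real.sqrt π * Real.Gamma (ν + 1/2))
  have hcpos : 0 < c := by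
    have := Real.Gamma_pos_of_pos (by linarith : 0 < ν + 1)
    have := Real.Gamma_pos_of_pos (by linarith : 0 < ν + 1 / 2)
    positivity
  refine ⟨2 * c, by positivity, fun f hf hf0 => ?_⟩
  have hν : ν ≠ -(1 / 2) := by linarith
  rw [PiMeas, if_neg hν, ← Measure.restrict_congr_set Ioo_ae_eq_Icc]
  refine (lintegral_withDensity_le_lintegral_mul _ (by fun_prop) _).trans ?_
  simp only [Pi.mul_apply]
  set g : ℝ → ℝ≥0∞ := fun w =>
    ENNReal.ofReal c * ENNReal.ofReal (f w * w ^ (ν - 1 / 2)) with hg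
  set h : ℝ → ℝ≥0∞ := fun u =>
    ENNReal.ofReal (c * (1 - u ^ 2) ^ (ν - 1 / 2)) * ENNReal.ofReal (f (1 - u)) with hh
  have key : ∀ u w : ℝ, 0 < w → w ≤ 1 - u → w ≤ 1 - u ^ 2 → h u ≤ g w := by
    intro u w hw hwu hwu2
    have e1 : (1 - u ^ 2) ^ (ν - 1 / 2) ≤ w ^ (ν - 1 / 2) :=
      Real.rpow_le_rpow_of_nonpos hw hwu2 (by linarith)
    have e2 : f (1 - u) ≤ f w := hf hw.le (hw.le.trans hwu) hwu
    have e3 : 0 ≤ f (1 - u) := hf0 _ (hw.le.trans hwu)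
    have e4 : 0 ≤ (1 - u ^ 2) ^ (ν - 1 / 2) := Real.rpow_nonneg (hw.le.trans hwu2) _
    simp only [hg, hh]
    rw [← ENNReal.ofReal_mul (by positivity), ← ENNReal.ofReal_mul (by positivity)]
    apply ENNReal.ofReal_le_ofReal
    rw [mul_assoc, mul_comm (f w)]
    gcongr
  have hm1 : MeasurableSet ((fun u : ℝ => 1 - u) ⁻¹' Ioc 0 1) :=
    measurableSet_Ioc.preimage (by fun_prop)
  have hm2 : MeasurableSet ((fun u : ℝ => 1 + u) ⁻¹' Ioc 0 1) :=
    measurableSet_Ioc.preimage (by fun_prop)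
  calc ∫⁻ u in Ioo (-1) 1, h u
      ≤ ∫⁻ u in ((fun u => 1 - u) ⁻¹' Ioc 0 1) ∪ ((fun u => 1 + u) ⁻¹' Ioc 0 1), h u := by
        refine lintegral_mono_set fun u hu => ?_
        rcases le_total 0 u with h | h
        · exact Or.inl ⟨by linarith [hu.2], by linarith⟩
        · exact Or.inr ⟨by linarith [hu.1], by linarith⟩
    _ ≤ _ := lintegral_union_le _ _ _
    _ ≤ (∫⁻ u in (fun u => 1 - u) ⁻¹' Ioc 0 1, g (1 - u)) +
          ∫⁻ u in (fun u => 1 + u) ⁻¹' Ioc 0 1, g (1 + u) := by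
        refine add_le_add (setLIntegral_mono' hm1 fun u hu => ?_)
          (setLIntegral_mono' hm2 fun u hu => ?_)
        · exact key _ _ hu.1 le_rfl (by nlinarith [hu.1, hu.2])
        · exact key _ _ hu.1 (by linarith [hu.2]) (by nlinarith [hu.1, hu.2])
    _ = 2 * ∫⁻ w in Ioc 0 1, g w := by
        rw [setLIntegral_comp_sub_left 1 g, setLIntegral_comp_add_left 1 g, two_mul]
    _ = _ := by
        rw [hg, lintegral_const_mul' _ _ ENNReal.ofReal_ne_top, ← mul_assoc,
          ENNReal.ofReal_mul zero_le_two]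
        simp

lemma ae_PiMeas_mem_Icc (ν : ℝ) : ∀ᵐ u ∂(PiMeas ν), u ∈ Icc (-1 : ℝ) 1 := by
  unfold PiMeas
  split_ifs
  · refine Measure.ae_smul_measure ?_ _
    rw [ae_add_measure_iff]
    constructor <;> simp [ae_dirac_eq]
  · exact (withDensity_absolutelyContinuous _ _).ae_le (ae_restrict_mem measurableSet_Icc)

lemma ae_piAux_mem_Icc (α : ℝ) (K : ℕ) : ∀ᵐ u ∂(piAux α K), u ∈ Icc (-1 : ℝ) 1 := by
  unfold piAux
  split_ifs <;> exact ae_PiMeas_mem_Icc _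

lemma piAux_univ_lt_top {α : ℝ} (h1 : -1 < α) (h2 : α < -(1 / 2)) (K : ℕ) :
    piAux α K univ < ⊤ := by
  unfold piAux
  split_ifs
  · rw [PiMeas, if_pos rfl]
    simp
  · obtain ⟨C, -, hC⟩ := exists_lintegral_PiMeas_le (ν := α + 1) (by linarith) (by linarith)
    have := hC (fun _ => 1) antitoneOn_const (by simp)
    simp only [one_mul, ENNReal.ofReal_one, lintegral_const] at this
    rw [lintegral_rpow_Ioc (by linarith) zero_le_one] at this
    exact this.trans_lt (ENNReal.mul_lt_top ENNReal.ofReal_lt_top ENNReal.ofReal_lt_top)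

/-- The power of the endpoint factor gained by integrating against `piAux`. -/
noncomputable def edgeExp (α : ℝ) (n : ℕ) : ℝ := if n = 0 then 0 else α + 1 / 2 + n / 2

lemma edgeExp_nonneg {α : ℝ} (h1 : -1 < α) (n : ℕ) : 0 ≤ edgeExp α n := by
  unfold edgeExp
  split_ifs with h
  · exact le_rfl
  · have : (1 : ℝ) ≤ n := by exact_mod_cast Nat.one_le_iff_ne_zero.2 h
    linarith

lemma exists_lintegral_PiMeas_rpow_le_one {ν F : ℝ} (h0 : 0 < ν) (h1 : ν < 1 / 2) (hF : ν < F) :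
    ∃ C : ℝ, 0 < C ∧ ∀ D X : ℝ, 0 < D → 0 < X →
      ∫⁻ u, ENNReal.ofReal ((D + X * (1 - u)) ^ (-F)) ∂(PiMeas ν) ≤
        ENNReal.ofReal (C * D ^ (ν - F) * X ^ (-ν)) := by
  obtain ⟨C, hC0, hC⟩ := exists_lintegral_PiMeas_le h0 h1
  refine ⟨C * 2, by positivity, fun D X hD hX => ?_⟩
  refine (hC (fun w => (D + X * w) ^ (-F)) ?_ ?_).trans ?_
  · intro x hx y hy hxy
    have hx' : 0 ≤ x := hx
    exact Real.rpow_le_rpow_of_nonpos (by positivity) (by gcongr) (by linarith)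
  · intro x hx
    have hx' : 0 ≤ x := hx
    positivity
  calc _ ≤ ENNReal.ofReal C * ∫⁻ w in Ioc 0 1, ENNReal.ofReal (D ^ (ν - F) * X ^ (-ν)) *
          ENNReal.ofReal (w ^ (-(1 / 2) : ℝ)) := by
        refine mul_le_mul' le_rfl ?_
        refine setLIntegral_mono' (measurableSet_Ioc (α := ℝ)) fun w hw => ?_
        have hw0 : 0 < w := hw.1
        rw [← ENNReal.ofReal_mul (by positivity)]
        apply ENNReal.ofReal_le_ofReal
        have e1 : (D + X * w) ^ (-F) = (D + X * w) ^ (ν - F) * (D + X * w) ^ (-ν) := by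
          rw [← Real.rpow_add (by positivity)]; congr 1; ring
        have e2 : (D + X * w) ^ (ν - F) ≤ D ^ (ν - F) :=
          Real.rpow_le_rpow_of_nonpos hD (by linarith [mul_pos hX hw0]) (by linarith)
        have e3 : (D + X * w) ^ (-ν) ≤ (X * w) ^ (-ν) :=
          Real.rpow_le_rpow_of_nonpos (by positivity) (by linarith) (by linarith)
        have e4 : w ^ (-(1 / 2) : ℝ) = w ^ (-ν) * w ^ (ν - 1 / 2) := by
          rw [← Real.rpow_add hw0]; congr 1; ring
        calc (D + X * w) ^ (-F) * w ^ (ν - 1 / 2)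
            ≤ (D ^ (ν - F) * (X * w) ^ (-ν)) * w ^ (ν - 1 / 2) := by rw [e1]; gcongr
          _ = _ := by rw [e4, Real.mul_rpow hX.le hw0.le]; ring
    _ = _ := by
        rw [lintegral_const_mul' _ _ ENNReal.ofReal_ne_top,
          lintegral_rpow_Ioc (by norm_num) zero_le_one, ← ENNReal.ofReal_mul (by positivity),
          ← ENNReal.ofReal_mul hC0.le, Real.one_rpow]
        congr 1
        norm_num
        ring

lemma exists_lintegral_PiMeas_rpow_le_two {ν F : ℝ} (h0 : 0 < ν) (h1 : ν < 1 / 2)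
    (hF : ν + 1 / 2 < F) :
    ∃ C : ℝ, 0 < C ∧ ∀ D X : ℝ, 0 < D → 0 < X →
      ∫⁻ u, ENNReal.ofReal ((D + X * (1 - u)) ^ (-F)) ∂(PiMeas ν) ≤
        ENNReal.ofReal (C * D ^ (ν + 1 / 2 - F) * X ^ (-(ν + 1 / 2))) := by
  obtain ⟨C, hC0, hC⟩ := exists_lintegral_PiMeas_le h0 h1
  have hF' : 0 < F - (ν + 1 / 2) := by linarith
  refine ⟨C * (1 / (ν + 1 / 2) + 1 / (F - (ν + 1 / 2))), by positivity, fun D X hD hX => ?_⟩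
  refine (hC (fun w => (D + X * w) ^ (-F)) ?_ ?_).trans ?_
  · intro x hx y hy hxy
    have hx' : 0 ≤ x := hx
    exact Real.rpow_le_rpow_of_nonpos (by positivity) (by gcongr) (by linarith)
  · intro x hx
    have hx' : 0 ≤ x := hx
    positivity
  calc _ ≤ ENNReal.ofReal C * ∫⁻ w in Ioi 0, ENNReal.ofReal (X ^ (-F)) *
          ENNReal.ofReal (max (D / X) w ^ (-F) * w ^ (ν + 1 / 2 - 1)) := by
        refine mul_le_mul' le_rfl ?_
        refine (setLIntegral_mono' (measurableSet_Ioc (α := ℝ)) fun w hw => ?_).trans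
          (lintegral_mono_set Ioc_subset_Ioi_self)
        have hw0 : 0 < w := hw.1
        have hmax : 0 < max (D / X) w := lt_max_of_lt_right hw0
        rw [← ENNReal.ofReal_mul (by positivity)]
        apply ENNReal.ofReal_le_ofReal
        have e1 : (D + X * w) ^ (-F) ≤ (X * max (D / X) w) ^ (-F) := by
          refine Real.rpow_le_rpow_of_nonpos (by positivity) ?_ (by linarith)
          rw [mul_max_of_nonneg _ _ hX.le, mul_div_cancel₀ _ hX.ne']
          exact max_le (by linarith [mul_pos hX hw0]) (by linarith)
        have e2 : ν + 1 / 2 - 1 = ν - 1 / 2 := by ring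
        rw [e2, ← mul_assoc, ← Real.mul_rpow hX.le hmax.le]
        gcongr
    _ ≤ ENNReal.ofReal C * (ENNReal.ofReal (X ^ (-F)) * ENNReal.ofReal
          ((1 / (ν + 1 / 2) + 1 / (F - (ν + 1 / 2))) * (D / X) ^ (ν + 1 / 2 - F))) := by
        rw [lintegral_const_mul' _ _ ENNReal.ofReal_ne_top]
        gcongr
        exact lintegral_max_rpow_mul_rpow_le (by linarith) hF (by positivity)
    _ = _ := by
        rw [← ENNReal.ofReal_mul (by positivity), ← ENNReal.ofReal_mul hC0.le]
        congr 1
        have e : X ^ (-F) = X ^ (-(ν + 1 / 2)) * X ^ (ν + 1 / 2 - F) := by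
          rw [← Real.rpow_add hX]; congr 1; ring
        rw [Real.div_rpow hD.le hX.le, e]
        field_simp

lemma exists_lintegral_piAux_rpow_le {α F : ℝ} (h1 : -1 < α) (h2 : α < -(1 / 2)) {K k : ℕ}
    (hK : K ≤ 1) (hk : k ≤ 2) (hF : edgeExp α (K * k) < F) :
    ∃ C : ℝ, 0 < C ∧ ∀ D X : ℝ, 0 < D → 0 < X →
      ∫⁻ u, ENNReal.ofReal ((D + X * (1 - u)) ^ (-F)) ∂(piAux α K) ≤
        ENNReal.ofReal (C * D ^ (edgeExp α (K * k) - F) * X ^ (-edgeExp α (K * k))) := by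
  rcases Nat.eq_zero_or_pos (K * k) with h | h
  · rw [h] at hF ⊢
    simp only [edgeExp, if_true] at hF ⊢
    refine ⟨(piAux α K univ).toReal + 1, by positivity, fun D X hD hX => ?_⟩
    calc _ ≤ ∫⁻ _, ENNReal.ofReal (D ^ (-F)) ∂(piAux α K) := by
          refine lintegral_mono_ae ((ae_piAux_mem_Icc α K).mono fun u hu => ?_)
          refine ENNReal.ofReal_le_ofReal (Real.rpow_le_rpow_of_nonpos hD ?_ (by linarith))
          linarith [mul_nonneg hX.le (sub_nonneg.2 hu.2)]
      _ = ENNReal.ofReal (D ^ (-F)) * ENNReal.ofReal (piAux α K univ).toReal := by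
          rw [lintegral_const, ENNReal.ofReal_toReal (piAux_univ_lt_top h1 h2 K).ne]
      _ ≤ _ := by
          rw [← ENNReal.ofReal_mul (by positivity)]
          apply ENNReal.ofReal_le_ofReal
          have : 0 < D ^ (-F) := by positivity
          rw [neg_zero, Real.rpow_zero, zero_sub]
          nlinarith
  · obtain rfl : K = 1 := by
      have := Nat.pos_of_mul_pos_right h
      omega
    simp only [one_mul, piAux, one_ne_zero, if_false] at h hF ⊢
    obtain rfl | rfl : k = 1 ∨ k = 2 := by omega
    · have e : edgeExp α 1 = α + 1 := by norm_num [edgeExp]; ring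
      rw [e] at hF ⊢
      exact exists_lintegral_PiMeas_rpow_le_one (by linarith) (by linarith) hF
    · have e : edgeExp α 2 = α + 1 + 1 / 2 := by norm_num [edgeExp]; ring
      rw [e] at hF ⊢
      exact exists_lintegral_PiMeas_rpow_le_two (by linarith) (by linarith) hF

lemma exists_setLIntegral_rpow_le {γ : ℝ} (h1 : -1 < γ) (h2 : γ < 0) :
    ∃ C : ℝ, 0 < C ∧ ∀ θ d : ℝ, 0 ≤ θ → 0 < d →
      ∫⁻ x in Ioo (θ - d) (θ + d) ∩ Ioi 0, ENNReal.ofReal (x ^ γ) ≤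
        ENNReal.ofReal (C * d * (θ + d) ^ γ) := by
  have hγ : 0 < γ + 1 := by linarith
  refine ⟨3 / (γ + 1) + 2 * (1 / 3) ^ γ, by positivity, fun θ d hθ hd => ?_⟩
  have hp : 0 < (θ + d) ^ γ := by positivity
  rcases lt_or_ge θ (2 * d) with h | h
  · calc _ ≤ ∫⁻ x in Ioc 0 (θ + d), ENNReal.ofReal (x ^ γ) :=
          lintegral_mono_set fun x hx => ⟨hx.2, hx.1.2.le⟩
      _ = ENNReal.ofReal ((θ + d) ^ (γ + 1) / (γ + 1)) := lintegral_rpow_Ioc h1 (by positivity)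
      _ ≤ _ := by
          apply ENNReal.ofReal_le_ofReal
          rw [Real.rpow_add (by positivity), Real.rpow_one]
          calc (θ + d) ^ γ * (θ + d) / (γ + 1) ≤ (θ + d) ^ γ * (3 * d) / (γ + 1) := by
                gcongr; linarith
            _ = 3 / (γ + 1) * d * (θ + d) ^ γ := by ring
            _ ≤ _ := by
                gcongr
                have : 0 < (1 / 3 : ℝ) ^ γ := by positivity
                linarith
  · calc _ ≤ ∫⁻ x in Ioo (θ - d) (θ + d), ENNReal.ofReal ((1 / 3) ^ γ * (θ + d) ^ γ) := by
          refine (lintegral_mono_set inter_subset_left).trans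
            (setLIntegral_mono' (measurableSet_Ioo (α := ℝ)) fun x hx => ?_)
          apply ENNReal.ofReal_le_ofReal
          rw [← Real.mul_rpow (by norm_num) (by positivity)]
          exact Real.rpow_le_rpow_of_nonpos (by positivity) (by linarith [hx.1]) h2.le
      _ = ENNReal.ofReal ((1 / 3) ^ γ * (θ + d) ^ γ * (2 * d)) := by
          rw [setLIntegral_const, Real.volume_Ioo, ← ENNReal.ofReal_mul (by positivity)]
          congr 2; ring
      _ ≤ _ := by
          apply ENNReal.ofReal_le_ofReal
          have : 0 < 3 / (γ + 1) := by positivity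
          have := mul_pos this (mul_pos hd hp)
          nlinarith

lemma measurableSet_ballI (θ r : ℝ) : MeasurableSet (ballI θ r) :=
  measurableSet_Ioo.inter measurableSet_Icc

lemma muab_ballI_eq (α β θ r : ℝ) :
    muab α β (ballI θ r) = ∫⁻ x in Ioo (θ - r) (θ + r) ∩ Ioo 0 π,
      ENNReal.ofReal (sin (x / 2) ^ (2 * α + 1) * cos (x / 2) ^ (2 * β + 1)) := by
  rw [muab, withDensity_apply _ (measurableSet_ballI θ r), ← Measure.restrict_congr_set Ioo_ae_eq_Icc,
    Measure.restrict_restrict (measurableSet_ballI θ r)]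
  congr 2
  rw [ballI, inter_assoc, inter_eq_self_of_subset_right Ioo_subset_Icc_self]

lemma sin_half_mem_Ioo {x : ℝ} (hx : x ∈ Ioo 0 π) : 0 < sin (x / 2) :=
  sin_pos_of_pos_of_lt_pi (by linarith [hx.1]) (by linarith [hx.1, hx.2])

lemma cos_half_mem_Ioo {x : ℝ} (hx : x ∈ Ioo 0 π) : 0 < cos (x / 2) :=
  cos_pos_of_mem_Ioo ⟨by linarith [hx.1, pi_pos], by linarith [hx.2]⟩

lemma ofReal_abs_sub_le_muab_ballI {α β : ℝ} (hα : α < -(1 / 2)) (hβ : β < -(1 / 2)) {θ φ : ℝ}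
    (hθ : θ ∈ Icc 0 π) (hφ : φ ∈ Icc 0 π) :
    ENNReal.ofReal |θ - φ| ≤ muab α β (ballI θ |θ - φ|) := by
  rw [muab_ballI_eq]
  calc ENNReal.ofReal |θ - φ| = ∫⁻ _ in Ioo (min θ φ) (max θ φ), 1 := by
        rw [setLIntegral_const, Real.volume_Ioo, one_mul, max_sub_min_eq_abs, abs_sub_comm]
    _ ≤ ∫⁻ _ in Ioo (θ - |θ - φ|) (θ + |θ - φ|) ∩ Ioo 0 π, 1 := by
        refine lintegral_mono_set fun x hx => ⟨?_, ?_⟩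
        · rcases le_total θ φ with h | h
          · rw [min_eq_left h, max_eq_right h] at hx
            rw [abs_of_nonpos (sub_nonpos.2 h)]
            exact ⟨by linarith [hx.1, hx.2], by linarith [hx.1, hx.2]⟩
          · rw [min_eq_right h, max_eq_left h] at hx
            rw [abs_of_nonneg (sub_nonneg.2 h)]
            exact ⟨by linarith [hx.1, hx.2], by linarith [hx.1, hx.2]⟩
        · exact ⟨(le_min hθ.1 hφ.1).trans_lt hx.1, hx.2.trans_le (max_le hθ.2 hφ.2)⟩
    _ ≤ _ := by
        refine setLIntegral_mono' (measurableSet_Ioo.inter measurableSet_Ioo) fun x hx => ?_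
        rw [ENNReal.one_le_ofReal]
        have h1 := Real.one_le_rpow_of_pos_of_le_one_of_nonpos (sin_half_mem_Ioo hx.2)
          (sin_le_one _) (by linarith : 2 * α + 1 ≤ 0)
        have h2 := Real.one_le_rpow_of_pos_of_le_one_of_nonpos (cos_half_mem_Ioo hx.2)
          (cos_le_one _) (by linarith : 2 * β + 1 ≤ 0)
        exact one_le_mul_of_one_le_of_one_le h1 h2

lemma sin_rpow_mul_cos_rpow_le {a b x : ℝ} (ha : a ≤ 0) (hb : b ≤ 0) (hx : x ∈ Ioo 0 π) :
    sin (x / 2) ^ a * cos (x / 2) ^ b ≤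
      (1 / 2) ^ b * (1 / π) ^ a * x ^ a + (1 / 2) ^ a * (1 / π) ^ b * (π - x) ^ b := by
  have hx' := Ioo_subset_Icc_self hx
  have hx0 := hx.1
  have hx1 : 0 < π - x := sub_pos.2 hx.2
  have hs := sin_half_mem_Ioo hx
  have hc := cos_half_mem_Ioo hx
  have h1 : sin (x / 2) ^ a ≤ (1 / π) ^ a * x ^ a := by
    rw [← Real.mul_rpow (by positivity) hx0.le]
    refine Real.rpow_le_rpow_of_nonpos (by positivity) ?_ ha
    rw [one_div_mul_eq_div]
    exact div_pi_le_sin_half hx'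
  have h2 : cos (x / 2) ^ b ≤ (1 / π) ^ b * (π - x) ^ b := by
    rw [← Real.mul_rpow (by positivity) hx1.le]
    refine Real.rpow_le_rpow_of_nonpos (by positivity) ?_ hb
    rw [one_div_mul_eq_div, cos_half_eq_sin]
    exact div_pi_le_sin_half (pi_sub_mem hx')
  have p1 : 0 < (1 / 2 : ℝ) ^ b * (1 / π) ^ a * x ^ a := by positivity
  have p2 : 0 < (1 / 2 : ℝ) ^ a * (1 / π) ^ b * (π - x) ^ b := by positivity
  rcases half_le_sin_or_half_le_cos hx' with h | h
  · have h3 : sin (x / 2) ^ a ≤ (1 / 2) ^ a := Real.rpow_le_rpow_of_nonpos (by norm_num) h ha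
    calc _ ≤ (1 / 2) ^ a * ((1 / π) ^ b * (π - x) ^ b) := by gcongr
      _ ≤ _ := by linarith
  · have h3 : cos (x / 2) ^ b ≤ (1 / 2) ^ b := Real.rpow_le_rpow_of_nonpos (by norm_num) h hb
    calc _ ≤ ((1 / π) ^ a * x ^ a) * (1 / 2) ^ b := by gcongr
      _ ≤ _ := by linarith

lemma exists_muab_ballI_le {α β : ℝ} (hα₁ : -1 < α) (hα₂ : α < -(1 / 2))
    (hβ₁ : -1 < β) (hβ₂ : β < -(1 / 2)) :
    ∃ C : ℝ, 0 < C ∧ ∀ θ ∈ Icc 0 π, ∀ φ ∈ Icc 0 π, θ ≠ φ →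
      muab α β (ballI θ |θ - φ|) ≤ ENNReal.ofReal (C * (|θ - φ| *
        (sin (θ / 2) + sin (φ / 2)) ^ (2 * α + 1) *
        (cos (θ / 2) + cos (φ / 2)) ^ (2 * β + 1))) := by
  obtain ⟨A, hA0, hA⟩ := exists_setLIntegral_rpow_le (γ := 2 * α + 1) (by linarith) (by linarith)
  obtain ⟨B, hB0, hB⟩ := exists_setLIntegral_rpow_le (γ := 2 * β + 1) (by linarith) (by linarith)
  set a := 2 * α + 1 with ha
  set b := 2 * β + 1 with hb
  have ha0 : a ≤ 0 := by linarith
  have hb0 : b ≤ 0 := by linarith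
  set c₁ : ℝ := (1 / 2) ^ b * (1 / π) ^ a
  set c₂ : ℝ := (1 / 2) ^ a * (1 / π) ^ b
  have hc₁0 : 0 < c₁ := by positivity
  have hc₂0 : 0 < c₂ := by positivity
  refine ⟨c₁ * A / 2 ^ b + c₂ * B / 2 ^ a, by positivity, fun θ hθ φ hφ hne => ?_⟩
  set d := |θ - φ|
  have hd0 : 0 < d := abs_pos.2 (sub_ne_zero.2 hne)
  set S := sin (θ / 2) + sin (φ / 2)
  set T := cos (θ / 2) + cos (φ / 2)
  have hS0 : 0 < S := (div_pos hd0 pi_pos).trans_le (abs_sub_div_pi_le_sin_add_sin hθ hφ)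
  have hT0 : 0 < T := (div_pos hd0 pi_pos).trans_le (abs_sub_div_pi_le_cos_add_cos hθ hφ)
  have hS2 : S ≤ 2 := by linarith [sin_le_one (θ / 2), sin_le_one (φ / 2)]
  have hT2 : T ≤ 2 := by linarith [cos_le_one (θ / 2), cos_le_one (φ / 2)]
  have eS : (θ + d) ^ a ≤ S ^ a := Real.rpow_le_rpow_of_nonpos hS0 (sin_add_sin_le hθ hφ) ha0
  have eT : (π - θ + d) ^ b ≤ T ^ b := Real.rpow_le_rpow_of_nonpos hT0 (cos_add_cos_le hθ hφ) hb0
  have fS : 2 ^ a ≤ S ^ a := Real.rpow_le_rpow_of_nonpos hS0 hS2 ha0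
  have fT : 2 ^ b ≤ T ^ b := Real.rpow_le_rpow_of_nonpos hT0 hT2 hb0
  rw [muab_ballI_eq]
  calc _ ≤ ∫⁻ x in Ioo (θ - d) (θ + d) ∩ Ioo 0 π, (ENNReal.ofReal c₁ * ENNReal.ofReal (x ^ a) +
          ENNReal.ofReal c₂ * ENNReal.ofReal ((π - x) ^ b)) := by
        refine setLIntegral_mono' (measurableSet_Ioo.inter measurableSet_Ioo) fun x hx => ?_
        have hx0 : 0 < x := hx.2.1
        have hx1 : 0 < π - x := sub_pos.2 hx.2.2
        rw [← ENNReal.ofReal_mul (by positivity), ← ENNReal.ofReal_mul (by positivity),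
          ← ENNReal.ofReal_add (by positivity) (by positivity)]
        exact ENNReal.ofReal_le_ofReal (sin_rpow_mul_cos_rpow_le ha0 hb0 hx.2)
    _ = ENNReal.ofReal c₁ * (∫⁻ x in Ioo (θ - d) (θ + d) ∩ Ioo 0 π, ENNReal.ofReal (x ^ a)) +
        ENNReal.ofReal c₂ *
          ∫⁻ x in Ioo (θ - d) (θ + d) ∩ Ioo 0 π, ENNReal.ofReal ((π - x) ^ b) := by
        rw [lintegral_add_left (by fun_prop), lintegral_const_mul' _ _ ENNReal.ofReal_ne_top,
          lintegral_const_mul' _ _ ENNReal.ofReal_ne_top]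
    _ ≤ ENNReal.ofReal c₁ * ENNReal.ofReal (A * d * (θ + d) ^ a) +
        ENNReal.ofReal c₂ * ENNReal.ofReal (B * d * (π - θ + d) ^ b) := by
        gcongr
        · refine le_trans (lintegral_mono_set ?_) (hA θ d hθ.1 hd0)
          exact inter_subset_inter_right _ fun x hx => hx.1
        · refine le_trans (lintegral_mono_set ?_) ((setLIntegral_comp_sub_left π
            (fun y => ENNReal.ofReal (y ^ b)) _).trans_le (hB (π - θ) d (sub_nonneg.2 hθ.2) hd0))
          exact fun x hx => ⟨⟨by linarith [hx.1.2], by linarith [hx.1.1]⟩, sub_pos.2 hx.2.2⟩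
    _ ≤ _ := by
        have hθ0 := hθ.1
        have hθ1 : 0 ≤ π - θ := sub_nonneg.2 hθ.2
        rw [← ENNReal.ofReal_mul (by positivity), ← ENNReal.ofReal_mul (by positivity),
          ← ENNReal.ofReal_add (by positivity) (by positivity)]
        apply ENNReal.ofReal_le_ofReal
        have g1 : (θ + d) ^ a ≤ S ^ a * T ^ b / 2 ^ b := by
          rw [le_div_iff₀ (by positivity)]; gcongr
        have g2 : (π - θ + d) ^ b ≤ S ^ a * T ^ b / 2 ^ a := by
          rw [le_div_iff₀ (by positivity), mul_comm (S ^ a)]; gcongr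
        calc _ ≤ c₁ * (A * d * (S ^ a * T ^ b / 2 ^ b)) + c₂ * (B * d * (S ^ a * T ^ b / 2 ^ a)) := by
              gcongr
          _ = _ := by ring

/-- The weighted measure `t ^ (W - 1) dt` on `(0, 1)`. -/
noncomputable def powMeas (W : ℝ) : Measure ℝ :=
  (volume.restrict (Ioo (0 : ℝ) 1)).withDensity (fun t => ENNReal.ofReal (t ^ (W - 1)))

lemma ae_powMeas_mem_Ioo (W : ℝ) : ∀ᵐ t ∂(powMeas W), t ∈ Ioo (0 : ℝ) 1 :=
  (withDensity_absolutelyContinuous _ _).ae_le (ae_restrict_mem measurableSet_Ioo)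

lemma powMeas_univ_le_one {W : ℝ} (hW : 1 ≤ W) : powMeas W univ ≤ 1 := by
  rw [powMeas, withDensity_apply _ MeasurableSet.univ, Measure.restrict_univ]
  calc _ ≤ ∫⁻ _ in Ioo (0 : ℝ) 1, 1 := by
        refine setLIntegral_mono' (measurableSet_Ioo (α := ℝ)) fun t ht => ?_
        rw [ENNReal.ofReal_le_one]
        exact Real.rpow_le_one ht.1.le ht.2.le (by linarith)
    _ = 1 := by simp

lemma eLpNorm_one_powMeas_le {W : ℝ} (hW : 1 ≤ W) (p : ℝ≥0∞) :
    eLpNorm (fun _ : ℝ => (1 : ℝ)) p (powMeas W) ≤ 1 := by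
  refine (eLpNorm_le_of_ae_bound (C := 1) (by simp)).trans ?_
  rw [ENNReal.ofReal_one, mul_one]
  exact ENNReal.rpow_le_one (powMeas_univ_le_one hW) (by positivity)

lemma exists_eLpNorm_powMeas_le {G W : ℝ} (hG : 0 < G) (hW : 1 ≤ W) {p : ℝ≥0∞} (hp : 1 ≤ p) :
    ∃ C : ℝ, 0 < C ∧ ∀ d : ℝ, 0 < d →
      eLpNorm (fun t : ℝ => (t ^ 2 + d ^ 2) ^ (-(G + W / (2 * p.toReal)))) p (powMeas W) ≤
        ENNReal.ofReal (C * d ^ (-(2 * G))) := by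
  have hd2 : ∀ d H : ℝ, 0 < d → (d ^ 2) ^ H = d ^ (2 * H) := fun d H hd => by
    rw [← Real.rpow_natCast, ← Real.rpow_mul hd.le]; norm_num
  by_cases htop : p = ⊤
  · subst htop
    refine ⟨1, one_pos, fun d hd => ?_⟩
    rw [eLpNorm_exponent_top]
    refine eLpNormEssSup_le_of_ae_bound (Filter.Eventually.of_forall fun t => ?_)
    rw [Real.norm_of_nonneg (by positivity), ENNReal.toReal_top, mul_zero, div_zero, add_zero,
      one_mul, ← mul_neg, ← hd2 d _ hd]
    exact Real.rpow_le_rpow_of_nonpos (by positivity) (by linarith [sq_nonneg t]) (by linarith)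
  · set P := p.toReal with hP
    have hP1 : 1 ≤ P := by
      rw [hP, ← ENNReal.toReal_one]; exact ENNReal.toReal_mono htop hp
    have hP0 : 0 < P := by linarith
    have hGP : 0 < G * P := by positivity
    set c : ℝ := 1 / W + 1 / (2 * (G * P))
    have hc0 : 0 < c := by positivity
    refine ⟨c ^ (1 / P), by positivity, fun d hd => ?_⟩
    rw [eLpNorm_eq_lintegral_rpow_enorm_toReal (by positivity) htop, ← hP]
    have key : ∫⁻ t, ‖(t ^ 2 + d ^ 2) ^ (-(G + W / (2 * P)))‖ₑ ^ P ∂(powMeas W) ≤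
        ENNReal.ofReal (c * d ^ (-(2 * (G * P)))) := by
      refine (lintegral_withDensity_le_lintegral_mul _ (by fun_prop) _).trans ?_
      have hn := lintegral_max_rpow_mul_rpow_le (a := W) (F := 2 * (G * P) + W) (c := d)
        (by linarith) (by linarith) hd
      rw [add_sub_cancel_right, sub_add_cancel_right] at hn
      refine le_trans ?_ hn
      refine (setLIntegral_mono' (measurableSet_Ioo (α := ℝ)) fun t ht => ?_).trans
        (lintegral_mono_set Ioo_subset_Ioi_self)
      have ht0 : 0 < t := ht.1
      have hm : 0 < max d t := lt_max_of_lt_left hd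
      rw [Pi.mul_apply, Real.enorm_of_nonneg (by positivity),
        ENNReal.ofReal_rpow_of_nonneg (by positivity) hP0.le, ← ENNReal.ofReal_mul (by positivity)]
      apply ENNReal.ofReal_le_ofReal
      rw [mul_comm, ← Real.rpow_mul (by positivity)]
      have e : max d t ^ (-(2 * (G * P) + W)) = (max d t ^ 2) ^ (-(G + W / (2 * P)) * P) := by
        rw [hd2 _ _ hm]; congr 1; field_simp
      rw [e]
      gcongr ?_ * _
      refine Real.rpow_le_rpow_of_nonpos (by positivity) ?_ ?_
      · rcases le_total d t with h | h
        · rw [max_eq_right h]; nlinarith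
        · rw [max_eq_left h]; nlinarith
      · have : 0 < (G + W / (2 * P)) * P := by positivity
        linarith
    calc _ ≤ (ENNReal.ofReal (c * d ^ (-(2 * (G * P))))) ^ (1 / P) :=
          ENNReal.rpow_le_rpow key (by positivity)
      _ = _ := by
          rw [ENNReal.ofReal_rpow_of_nonneg (by positivity) (by positivity),
            Real.mul_rpow hc0.le (by positivity), ← Real.rpow_mul hd.le]
          congr 3
          field_simp

/-- After integrating out `u` and `v`, an exponent `G > 0` of `t ^ 2 + d ^ 2` can be chosen such
that the remaining powers of `d` and of the endpoint factors are harmless. -/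
lemma exists_exponent {α β s : ℝ} (hα₁ : -1 < α) (hα₂ : α < -(1 / 2))
    (hβ₁ : -1 < β) (hβ₂ : β < -(1 / 2)) (hs : 0 ≤ s) (m n : ℕ) :
    ∃ G : ℝ, 0 < G ∧
      α + β + 3 / 2 + (m : ℝ) / 2 + (n : ℝ) / 2 + s / 2 ≤ G + edgeExp α m + edgeExp β n ∧
      0 ≤ 1 + s - 2 * G ∧
      0 ≤ 1 + s - 2 * G + (m - 2 * edgeExp α m + (2 * α + 1)) ∧
      0 ≤ 1 + s - 2 * G + (n - 2 * edgeExp β n + (2 * β + 1)) := by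
  unfold edgeExp
  split_ifs with hm hn hn
  · subst hm hn
    rcases le_total α β with h | h
    · refine ⟨s / 2 + 1 + α, ?_, ?_, ?_, ?_, ?_⟩ <;> push_cast <;> linarith
    · refine ⟨s / 2 + 1 + β, ?_, ?_, ?_, ?_, ?_⟩ <;> push_cast <;> linarith
  · subst hm
    refine ⟨s / 2 + 1 + α, ?_, ?_, ?_, ?_, ?_⟩ <;> push_cast <;> linarith
  · subst hn
    refine ⟨s / 2 + 1 + β, ?_, ?_, ?_, ?_, ?_⟩ <;> push_cast <;> linarith
  · refine ⟨1 / 2 + s / 2, ?_, ?_, ?_, ?_, ?_⟩ <;> linarith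

lemma exists_enorm_integral_qf_le {α β : ℝ} (hα₁ : -1 < α) (hα₂ : α < -(1 / 2))
    (hβ₁ : -1 < β) (hβ₂ : β < -(1 / 2)) {K R k r : ℕ} (hK : K ≤ 1) (hR : R ≤ 1)
    (hk : k ≤ 2) (hr : r ≤ 2) {E F : ℝ} (hEF : E ≤ F)
    (hF : edgeExp α (K * k) + edgeExp β (R * r) < F) :
    ∃ C : ℝ, 0 < C ∧ ∀ θ ∈ Icc 0 π, ∀ φ ∈ Icc 0 π, θ ≠ φ → ∀ t ∈ Ioo (0 : ℝ) 1,
      ‖∫ v, (∫ u, (t ^ 2 + qf θ φ u v) ^ (-E) ∂(piAux α K)) ∂(piAux β R)‖ₑ ≤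
        ENNReal.ofReal (C * ((sin (θ / 2) + sin (φ / 2)) ^ 2) ^ (-edgeExp α (K * k)) *
          ((cos (θ / 2) + cos (φ / 2)) ^ 2) ^ (-edgeExp β (R * r)) *
          (t ^ 2 + |θ - φ| ^ 2) ^ (-(F - edgeExp α (K * k) - edgeExp β (R * r)))) := by
  have hb := edgeExp_nonneg hα₁ (K * k)
  have hb' := edgeExp_nonneg hβ₁ (R * r)
  obtain ⟨C₁, hC₁0, hC₁⟩ := exists_lintegral_piAux_rpow_le (F := F) hα₁ hα₂ hK hk (by linarith)
  obtain ⟨C₂, hC₂0, hC₂⟩ := exists_lintegral_piAux_rpow_le (F := F - edgeExp α (K * k))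
    hβ₁ hβ₂ hR hr (by linarith)
  set b := edgeExp α (K * k)
  set b' := edgeExp β (R * r)
  set M : ℝ := 4 ^ (F - E) * (1 / 100) ^ (-F)
  have hM : 0 < M := by positivity
  refine ⟨M * C₁ * C₂, by positivity, fun θ hθ φ hφ hne t ht => ?_⟩
  set d := |θ - φ|
  have hd0 : 0 < d := abs_pos.2 (sub_ne_zero.2 hne)
  set S := sin (θ / 2) + sin (φ / 2)
  set T := cos (θ / 2) + cos (φ / 2)
  have hS0 : 0 < S := (div_pos hd0 pi_pos).trans_le (abs_sub_div_pi_le_sin_add_sin hθ hφ)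
  have hT0 : 0 < T := (div_pos hd0 pi_pos).trans_le (abs_sub_div_pi_le_cos_add_cos hθ hφ)
  have pointwise : ∀ u ∈ Icc (-1 : ℝ) 1, ∀ v ∈ Icc (-1 : ℝ) 1,
      ‖(t ^ 2 + qf θ φ u v) ^ (-E)‖ₑ ≤ ENNReal.ofReal M *
        ENNReal.ofReal ((t ^ 2 + d ^ 2 + T ^ 2 * (1 - v) + S ^ 2 * (1 - u)) ^ (-F)) := by
    intro u hu v hv
    have q1 : 1 / 100 * (d ^ 2 + T ^ 2 * (1 - v) + S ^ 2 * (1 - u)) ≤ qf θ φ u v :=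
      qf_lower_bound hθ hφ hu hv
    have q2 := qf_le_three hθ hφ hu hv
    have hu' : 0 ≤ 1 - u := sub_nonneg.2 hu.2
    have hv' : 0 ≤ 1 - v := sub_nonneg.2 hv.2
    have hD : 0 < t ^ 2 + d ^ 2 + T ^ 2 * (1 - v) + S ^ 2 * (1 - u) := by positivity
    have q3 : 1 / 100 * (t ^ 2 + d ^ 2 + T ^ 2 * (1 - v) + S ^ 2 * (1 - u)) ≤
        t ^ 2 + qf θ φ u v := by nlinarith [sq_nonneg t]
    have q4 : t ^ 2 + qf θ φ u v ≤ 4 := by nlinarith [ht.1, ht.2]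
    have q5 : 0 < t ^ 2 + qf θ φ u v := by linarith
    rw [Real.enorm_of_nonneg (by positivity), ← ENNReal.ofReal_mul hM.le]
    apply ENNReal.ofReal_le_ofReal
    have r1 : (t ^ 2 + qf θ φ u v) ^ (F - E) ≤ 4 ^ (F - E) :=
      Real.rpow_le_rpow q5.le q4 (by linarith)
    have r2 := Real.rpow_le_rpow_of_nonpos (by positivity) q3 (by linarith : -F ≤ 0)
    rw [Real.mul_rpow (by norm_num) hD.le] at r2
    calc (t ^ 2 + qf θ φ u v) ^ (-E)
        = (t ^ 2 + qf θ φ u v) ^ (F - E) * (t ^ 2 + qf θ φ u v) ^ (-F) := by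
          rw [← Real.rpow_add q5]; congr 1; ring
      _ ≤ 4 ^ (F - E) * ((1 / 100) ^ (-F) *
          (t ^ 2 + d ^ 2 + T ^ 2 * (1 - v) + S ^ 2 * (1 - u)) ^ (-F)) := by gcongr
      _ = _ := by rw [← mul_assoc]
  calc _ ≤ ∫⁻ v, ∫⁻ u, ‖(t ^ 2 + qf θ φ u v) ^ (-E)‖ₑ ∂(piAux α K) ∂(piAux β R) :=
        (enorm_integral_le_lintegral_enorm _).trans
          (lintegral_mono fun v => enorm_integral_le_lintegral_enorm _)
    _ ≤ ∫⁻ v, ENNReal.ofReal (M * C₁ * (S ^ 2) ^ (-b)) * ENNReal.ofReal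
          ((t ^ 2 + d ^ 2 + T ^ 2 * (1 - v)) ^ (-(F - b))) ∂(piAux β R) := by
        refine lintegral_mono_ae ((ae_piAux_mem_Icc β R).mono fun v hv => ?_)
        have hv' : 0 ≤ 1 - v := sub_nonneg.2 hv.2
        calc _ ≤ ∫⁻ u, ENNReal.ofReal M * ENNReal.ofReal
                ((t ^ 2 + d ^ 2 + T ^ 2 * (1 - v) + S ^ 2 * (1 - u)) ^ (-F)) ∂(piAux α K) :=
              lintegral_mono_ae ((ae_piAux_mem_Icc α K).mono fun u hu => pointwise u hu v hv)
          _ ≤ ENNReal.ofReal M * ENNReal.ofReal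
                (C₁ * (t ^ 2 + d ^ 2 + T ^ 2 * (1 - v)) ^ (b - F) * (S ^ 2) ^ (-b)) := by
              rw [lintegral_const_mul' _ _ ENNReal.ofReal_ne_top]
              gcongr
              exact hC₁ _ _ (by positivity) (by positivity)
          _ = _ := by
              rw [← ENNReal.ofReal_mul hM.le, ← ENNReal.ofReal_mul (by positivity), neg_sub]
              congr 1; ring
    _ ≤ ENNReal.ofReal (M * C₁ * (S ^ 2) ^ (-b)) * ENNReal.ofReal
          (C₂ * (t ^ 2 + d ^ 2) ^ (b' - (F - b)) * (T ^ 2) ^ (-b')) := by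
        rw [lintegral_const_mul' _ _ ENNReal.ofReal_ne_top]
        gcongr
        exact hC₂ _ _ (by positivity) (by positivity)
    _ = _ := by
        rw [← ENNReal.ofReal_mul (by positivity), ← neg_sub (F - b) b']
        congr 1; ring

theorem finbridge_low_both (α β : ℝ) (hα₁ : -1 < α) (hα₂ : α < -(1/2))
    (hβ₁ : -1 < β) (hβ₂ : β < -(1/2))
    (K R k r : ℕ) (hK : K ≤ 1) (hR : R ≤ 1) (hk : k ≤ 2) (hr : r ≤ 2)
    (W s : ℝ) (hW : 1 ≤ W) (hs : 0 ≤ s) (p : ℝ≥0∞) (hp : 1 ≤ p) :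
    ∃ C : ℝ, 0 < C ∧ ∀ θ ∈ Icc (0 : ℝ) π, ∀ φ ∈ Icc (0 : ℝ) π, θ ≠ φ →
      eLpNorm (fun t : ℝ =>
          1 + (Real.sin (θ/2) + Real.sin (φ/2)) ^ (K * k) *
            (Real.cos (θ/2) + Real.cos (φ/2)) ^ (R * r) *
            ∫ v, (∫ u,
                (t ^ 2 + qf θ φ u v) ^
                  (-(α + β + 3/2 + W / (2 * p.toReal) + (K * k : ℕ) / 2 + (R * r : ℕ) / 2
                      + s / 2))
              ∂(piAux α K)) ∂(piAux β R)) p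
          ((volume.restrict (Ioo (0 : ℝ) 1)).withDensity
            (fun t => ENNReal.ofReal (t ^ (W - 1))))
        ≤ ENNReal.ofReal
            (C * |θ - φ| ^ (-s) / (muab α β (ballI θ |θ - φ|)).toReal) := by
  have hn : ∀ x y : ℝ, 0 < x → (x ^ 2) ^ y = x ^ (2 * y) := fun x y hx => by
    rw [← Real.rpow_natCast, ← Real.rpow_mul hx.le]; norm_num
  obtain ⟨G, hG, hGE, hx, hxy, hxz⟩ := exists_exponent hα₁ hα₂ hβ₁ hβ₂ hs (K * k) (R * r)
  have hWp : 0 ≤ W / (2 * p.toReal) := by positivity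
  obtain ⟨C₁, hC₁0, hC₁⟩ := exists_enorm_integral_qf_le hα₁ hα₂ hβ₁ hβ₂ hK hR hk hr
    (E := α + β + 3/2 + W / (2 * p.toReal) + (K * k : ℕ) / 2 + (R * r : ℕ) / 2 + s / 2)
    (F := G + W / (2 * p.toReal) + edgeExp α (K * k) + edgeExp β (R * r))
    (by linarith) (by linarith)
  obtain ⟨C₂, hC₂0, hC₂⟩ := exists_eLpNorm_powMeas_le hG hW hp
  obtain ⟨C₃, hC₃0, hC₃⟩ := exists_muab_ballI_le hα₁ hα₂ hβ₁ hβ₂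
  obtain ⟨C₄, hC₄0, hC₄⟩ := exists_rpow_mul_rpow_mul_rpow_le hx hxy hxz
  obtain ⟨C₅, hC₅0, hC₅⟩ := exists_rpow_mul_rpow_mul_rpow_le (x := 1) (y := 2 * α + 1)
    (z := 2 * β + 1) zero_le_one (by linarith) (by linarith)
  refine ⟨C₃ * C₅ * π ^ s + C₁ * C₂ * C₃ * C₄, by positivity, fun θ hθ φ hφ hne => ?_⟩
  specialize hC₁ θ hθ φ hφ hne
  specialize hC₃ θ hθ φ hφ hne
  have hμ := ofReal_abs_sub_le_muab_ballI hα₂ hβ₂ hθ hφ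
  set μ := muab α β (ballI θ |θ - φ|)
  set b := edgeExp α (K * k)
  set b' := edgeExp β (R * r)
  set d := |θ - φ|
  have hd0 : 0 < d := abs_pos.2 (sub_ne_zero.2 hne)
  have hdπ : d ≤ π := abs_le.2 ⟨by linarith [hθ.1, hφ.2], by linarith [hθ.2, hφ.1]⟩
  have hdS : d / π ≤ sin (θ / 2) + sin (φ / 2) := abs_sub_div_pi_le_sin_add_sin hθ hφ
  have hdT : d / π ≤ cos (θ / 2) + cos (φ / 2) := abs_sub_div_pi_le_cos_add_cos hθ hφ
  have hS2 : sin (θ / 2) + sin (φ / 2) ≤ 2 := by linarith [sin_le_one (θ / 2), sin_le_one (φ / 2)]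
  have hT2 : cos (θ / 2) + cos (φ / 2) ≤ 2 := by linarith [cos_le_one (θ / 2), cos_le_one (φ / 2)]
  have hST : 1 / 2 ≤ sin (θ / 2) + sin (φ / 2) ∨ 1 / 2 ≤ cos (θ / 2) + cos (φ / 2) := by
    have := sin_half_nonneg hφ
    have := cos_half_nonneg hφ
    exact (half_le_sin_or_half_le_cos hθ).imp (fun h => by linarith) fun h => by linarith
  set S := sin (θ / 2) + sin (φ / 2)
  set T := cos (θ / 2) + cos (φ / 2)
  have hS0 : 0 < S := (div_pos hd0 pi_pos).trans_le hdS
  have hT0 : 0 < T := (div_pos hd0 pi_pos).trans_le hdT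
  specialize hC₄ d S T hd0 hdπ hdS hdT hS2 hT2 hST
  specialize hC₅ d S T hd0 hdπ hdS hdT hS2 hT2 hST
  rw [Real.rpow_one] at hC₅
  have hμtop : μ ≠ ⊤ := (hC₃.trans_lt ENNReal.ofReal_lt_top).ne
  have hμ0 : 0 < μ.toReal := ENNReal.toReal_pos ((ENNReal.ofReal_pos.2 hd0).trans_le hμ).ne' hμtop
  have hμle : μ.toReal ≤ C₃ * (d * S ^ (2 * α + 1) * T ^ (2 * β + 1)) :=
    ENNReal.toReal_le_of_le_ofReal (by positivity) hC₃
  set A : ℝ := S ^ (K * k) * T ^ (R * r) * (C₁ * (S ^ 2) ^ (-b) * (T ^ 2) ^ (-b')) with hA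
  have hA0 : 0 < A := by positivity
  set g : ℝ → ℝ := fun t => (t ^ 2 + d ^ 2) ^ (-(G + W / (2 * p.toReal)))
  have hgm : AEStronglyMeasurable g (powMeas W) := by
    have : Measurable g := by fun_prop
    exact this.aestronglyMeasurable
  change eLpNorm _ p (powMeas W) ≤ _
  calc _ ≤ eLpNorm ((fun _ : ℝ => (1 : ℝ)) + A • g) p (powMeas W) := by
        refine eLpNorm_mono_ae_real ((ae_powMeas_mem_Ioo W).mono fun t ht => ?_)
        have h := hC₁ t ht
        rw [Real.enorm_eq_ofReal_abs, ENNReal.ofReal_le_ofReal_iff (by positivity)] at h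
        refine (norm_add_le _ _).trans ?_
        rw [norm_one, Pi.add_apply, Pi.smul_apply, smul_eq_mul, Real.norm_eq_abs, abs_mul,
          abs_of_nonneg (by positivity : 0 ≤ S ^ (K * k) * T ^ (R * r))]
        have e : G + W / (2 * p.toReal) + b + b' - b - b' = G + W / (2 * p.toReal) := by ring
        rw [e] at h
        rw [hA, mul_assoc (S ^ (K * k) * T ^ (R * r))]
        gcongr
    _ ≤ eLpNorm (fun _ : ℝ => (1 : ℝ)) p (powMeas W) + eLpNorm (A • g) p (powMeas W) :=
        eLpNorm_add_le aestronglyMeasurable_const (hgm.const_smul A) hp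
    _ ≤ 1 + ENNReal.ofReal A * ENNReal.ofReal (C₂ * d ^ (-(2 * G))) := by
        rw [eLpNorm_const_smul, Real.enorm_of_nonneg hA0.le]
        gcongr
        · exact eLpNorm_one_powMeas_le hW p
        · exact hC₂ d hd0
    _ = ENNReal.ofReal (1 + A * (C₂ * d ^ (-(2 * G)))) := by
        rw [ENNReal.ofReal_add zero_le_one (by positivity), ENNReal.ofReal_mul hA0.le,
          ENNReal.ofReal_one]
    _ ≤ _ := by
        apply ENNReal.ofReal_le_ofReal
        rw [le_div_iff₀ hμ0, add_mul, one_mul, add_mul]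
        have e1 : A * (C₂ * d ^ (-(2 * G))) * (C₃ * (d * S ^ (2 * α + 1) * T ^ (2 * β + 1))) =
            C₁ * C₂ * C₃ * (d ^ (1 + s - 2 * G) * S ^ ((K * k : ℕ) - 2 * b + (2 * α + 1)) *
              T ^ ((R * r : ℕ) - 2 * b' + (2 * β + 1))) * d ^ (-s) := by
          have f1 : d ^ (1 + s - 2 * G) = d * d ^ (-(2 * G)) * d ^ s := by
            nth_rw 2 [← Real.rpow_one d]
            rw [← Real.rpow_add hd0, ← Real.rpow_add hd0]
            congr 1; ring
          have f2 : d ^ s * d ^ (-s) = 1 := by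
            rw [← Real.rpow_add hd0, add_neg_cancel, Real.rpow_zero]
          have f3 : S ^ ((K * k : ℕ) - 2 * b + (2 * α + 1)) =
              S ^ (K * k) * (S ^ 2) ^ (-b) * S ^ (2 * α + 1) := by
            rw [hn _ _ hS0, ← Real.rpow_natCast S (K * k), ← Real.rpow_add hS0,
              ← Real.rpow_add hS0]
            congr 1; ring
          have f4 : T ^ ((R * r : ℕ) - 2 * b' + (2 * β + 1)) =
              T ^ (R * r) * (T ^ 2) ^ (-b') * T ^ (2 * β + 1) := by
            rw [hn _ _ hT0, ← Real.rpow_natCast T (R * r), ← Real.rpow_add hT0,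
              ← Real.rpow_add hT0]
            congr 1; ring
          rw [f1, f3, f4, hA]
          linear_combination (-(S ^ (K * k) * T ^ (R * r) * (C₁ * (S ^ 2) ^ (-b) * (T ^ 2) ^ (-b')) *
            (C₂ * d ^ (-(2 * G))) * (C₃ * (d * S ^ (2 * α + 1) * T ^ (2 * β + 1))))) * f2
        refine add_le_add ?_ ?_
        · have h1 : 1 ≤ π ^ s * d ^ (-s) := by
            rw [Real.rpow_neg hd0.le, ← div_eq_mul_inv, one_le_div (by positivity)]
            gcongr
          calc μ.toReal ≤ C₃ * C₅ * 1 := by rw [mul_one]; exact hμle.trans (by gcongr)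
            _ ≤ C₃ * C₅ * (π ^ s * d ^ (-s)) := by gcongr
            _ = _ := by ring
        · calc _ ≤ A * (C₂ * d ^ (-(2 * G))) * (C₃ * (d * S ^ (2 * α + 1) * T ^ (2 * β + 1))) := by
                gcongr
            _ ≤ _ := by rw [e1]; gcongr
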